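/- arXiv:2106.04438 — 4 statements merged into one kernel-verified Lean document; each statement's English description precedes it below -/
import Mathlib

section
/- For all (p,t) ∈ ℝ^m × ℝ the following identity holds: X[η̄(Y)](p,t) − Y[η̄(X)](p,t) − η̄([X,Y])(p,t) = α·( X₁[ω(Y₁)](p) − Y₁[ω(X₁)](p) − ω(p)([X₁,Y₁](p)) ), where X[η̄(Y)](p,t) denotes the directional derivative of the function (q,s) ↦ α·ω(q)(Y₁(q)) + h₂(s) in the direction (X₁(p), h₁(t)), similarly for Y[η̄(X)], X₁[ω(Y₁)](p) is the directional derivative of q ↦ ω(q)(Y₁(q)) along X₁(p), and η̄([X,Y])(p,t) = α·ω(p)([X₁,Y₁](p)) + h₁(t)·h₂′(t) − h₂(t)·h₁′(t). (This is the key computation in the proof of Theorem 3.3: 2dη̄ = 2α·dω on M₁ × β(I).) -/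
/-!
The form `η̄ = α ω + dt` is a sum of pullbacks from the two factors of the product, so the
directional derivatives `X[η̄(Y)]` and `Y[η̄(X)]` split into an `ω`-part and a `dt`-part. The
`dt`-part of `X[η̄(Y)] - Y[η̄(X)]` is `h₁ h₂' - h₂ h₁'`, which is exactly `dt([X, Y])`: this is
`d(dt) = 0`.
-/

section

open VectorField

variable {𝕜 E F G : Type*} [NontriviallyNormedField 𝕜]
  [NormedAddCommGroup E] [NormedSpace 𝕜 E] [NormedAddCommGroup F] [NormedSpace 𝕜 F]
  [NormedAddCommGroup G] [NormedSpace 𝕜 G]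

theorem hasFDerivAt_comp_fst_add_comp_snd {f : E → G} {g : F → G} {f' : E →L[𝕜] G}
    {g' : F →L[𝕜] G} {z : E × F} (hf : HasFDerivAt f f' z.1) (hg : HasFDerivAt g g' z.2) :
    HasFDerivAt (fun y : E × F ↦ f y.1 + g y.2) (f'.coprod g') z :=
  (hf.comp z hasFDerivAt_fst).add (hg.comp z hasFDerivAt_snd)

theorem fderiv_const_mul_comp_fst_add_comp_snd_apply {A : Type*} [NormedRing A] [NormedAlgebra 𝕜 A]
    {f : E → A} {h : 𝕜 → A} {p : E} {t : 𝕜} (hf : DifferentiableAt 𝕜 f p)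
    (hh : DifferentiableAt 𝕜 h t) (a : A) (v : E) (c : 𝕜) :
    fderiv 𝕜 (fun z : E × 𝕜 ↦ a * f z.1 + h z.2) (p, t) (v, c) =
      a * fderiv 𝕜 f p v + c • deriv h t := by
  have hsum : HasFDerivAt (fun z : E × 𝕜 ↦ a * f z.1 + h z.2)
      ((a • fderiv 𝕜 f p).coprod (fderiv 𝕜 h t)) (p, t) :=
    hasFDerivAt_comp_fst_add_comp_snd (f := fun q ↦ a * f q)
      (hf.hasFDerivAt.const_mul a) hh.hasFDerivAt
  simp only [hsum.fderiv, ContinuousLinearMap.coprod_apply, smul_apply, fderiv_eq_smul_deriv,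
    smul_eq_mul]

theorem stmt_9_general {ω : E → E →L[𝕜] 𝕜} {X₁ Y₁ : E → E} {h₁ h₂ : 𝕜 → 𝕜} {p : E} {t : 𝕜}
    (hω : DifferentiableAt 𝕜 ω p) (hX₁ : DifferentiableAt 𝕜 X₁ p)
    (hY₁ : DifferentiableAt 𝕜 Y₁ p) (hh₁ : DifferentiableAt 𝕜 h₁ t)
    (hh₂ : DifferentiableAt 𝕜 h₂ t) (α : 𝕜) :
    fderiv 𝕜 (fun z : E × 𝕜 ↦ α * ω z.1 (Y₁ z.1) + h₂ z.2) (p, t) (X₁ p, h₁ t)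
        - fderiv 𝕜 (fun z : E × 𝕜 ↦ α * ω z.1 (X₁ z.1) + h₁ z.2) (p, t) (Y₁ p, h₂ t)
        - (α * ω p (lieBracket 𝕜 X₁ Y₁ p) + (h₁ t * deriv h₂ t - h₂ t * deriv h₁ t)) =
      α * (fderiv 𝕜 (fun q ↦ ω q (Y₁ q)) p (X₁ p) - fderiv 𝕜 (fun q ↦ ω q (X₁ q)) p (Y₁ p)
        - ω p (lieBracket 𝕜 X₁ Y₁ p)) := by
  rw [fderiv_const_mul_comp_fst_add_comp_snd_apply (hω.clm_apply hY₁) hh₂,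
    fderiv_const_mul_comp_fst_add_comp_snd_apply (hω.clm_apply hX₁) hh₁,
    smul_eq_mul, smul_eq_mul]
  ring

end

/-- The key computation in the proof of Theorem 3.3: for vector fields
`X = (X₁, h₁)`, `Y = (Y₁, h₂)` on `ℝ^m × ℝ`,
`X[η̄(Y)] − Y[η̄(X)] − η̄([X,Y]) = α·(X₁[ω(Y₁)] − Y₁[ω(X₁)] − ω([X₁,Y₁]))`,
i.e. `2dη̄ = 2α·dω`. -/
theorem stmt_9 (m : ℕ)
    (ω : (Fin m → ℝ) → ((Fin m → ℝ) →L[ℝ] ℝ)) (hω : ContDiff ℝ (⊤ : ℕ∞) ω)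
    (α : ℝ)
    (X₁ Y₁ : (Fin m → ℝ) → (Fin m → ℝ))
    (hX₁ : ContDiff ℝ (⊤ : ℕ∞) X₁) (hY₁ : ContDiff ℝ (⊤ : ℕ∞) Y₁)
    (h₁ h₂ : ℝ → ℝ) (hh₁ : ContDiff ℝ (⊤ : ℕ∞) h₁) (hh₂ : ContDiff ℝ (⊤ : ℕ∞) h₂) :
    ∀ (p : Fin m → ℝ) (t : ℝ),
      fderiv ℝ (fun qs : (Fin m → ℝ) × ℝ => α * ω qs.1 (Y₁ qs.1) + h₂ qs.2)
          (p, t) (X₁ p, h₁ t)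
      - fderiv ℝ (fun qs : (Fin m → ℝ) × ℝ => α * ω qs.1 (X₁ qs.1) + h₁ qs.2)
          (p, t) (Y₁ p, h₂ t)
      - (α * ω p (fderiv ℝ Y₁ p (X₁ p) - fderiv ℝ X₁ p (Y₁ p))
          + (h₁ t * deriv h₂ t - h₂ t * deriv h₁ t))
      = α * (fderiv ℝ (fun q => ω q (Y₁ q)) p (X₁ p)
          - fderiv ℝ (fun q => ω q (X₁ q)) p (Y₁ p)
          - ω p (fderiv ℝ Y₁ p (X₁ p) - fderiv ℝ X₁ p (Y₁ p))) := by
  exact fun p t ↦ stmt_9_general (hω.differentiable (by simp) p) (hX₁.differentiable (by simp) p)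
    (hY₁.differentiable (by simp) p) (hh₁.differentiable (by simp) t)
    (hh₂.differentiable (by simp) t) α
end

section
/- Assume dω = Φ₁ in the sense that D(q ↦ ω(q)(v))(p)(u) − D(q ↦ ω(q)(u))(p)(v) = 2·g₁(u, J v) for all p, u, v ∈ ℝ^{2n}. Then for all smooth vector fields X = (X₁, h₁), Y = (Y₁, h₂) on ℝ^{2n} × ℝ as in the product setup and all (p,t): X[η̄(Y)](p,t) − Y[η̄(X)](p,t) − η̄([X,Y])(p,t) = 2α·g( X(p,t), φ̄(Y(p,t)) ). In particular, when α = 1 the 1-form η̄ satisfies the contact metric condition dη̄ = Φ̄. (Theorem 3.3: (M₁ × β(I), φ̄, ξ̄, η̄, g) is a contact metric manifold when α = 1.) -/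
/-!
Write `η̄ = α π₁*ω + dt`. Since `dt` is closed and `d` commutes with pullbacks, `dη̄ = α π₁*dω`, and
Cartan's formula gives
`X[η̄(Y)] − Y[η̄(X)] − η̄([X, Y]) = dη̄(X, Y) = α dω(X₁, Y₁) = 2α g₁(X₁, J Y₁)`.
On the other side `η̄ ∘ φ̄ = 0`, so `g(X, φ̄ Y) = g₁(X₁, J Y₁)`.
-/

open ContinuousAlternatingMap ContinuousLinearMap VectorField

section

variable {𝕜 E F G : Type*} [NontriviallyNormedField 𝕜]
  [NormedAddCommGroup E] [NormedSpace 𝕜 E]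
  [NormedAddCommGroup F] [NormedSpace 𝕜 F]
  [NormedAddCommGroup G] [NormedSpace 𝕜 G]

/-- A differential 1-form, given as a field of continuous linear maps, regarded as a field of
alternating maps in one variable, so that `extDeriv` applies to it. -/
noncomputable def oneForm (ω : E → E →L[𝕜] G) (p : E) : E [⋀^Fin 1]→L[𝕜] G :=
  ofSubsingletonLIE (0 : Fin 1) (ω p)

@[simp]
theorem oneForm_apply (ω : E → E →L[𝕜] G) (p : E) (v : Fin 1 → E) :
    oneForm ω p v = ω p (v 0) :=
  rfl

theorem differentiableAt_oneForm {ω : E → E →L[𝕜] G} {p : E} (hω : DifferentiableAt 𝕜 ω p) :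
    DifferentiableAt 𝕜 (oneForm ω) p :=
  (ofSubsingletonLIE (𝕜 := 𝕜) (E := E) (F := G) (0 : Fin 1)).differentiableAt.comp p hω

theorem extDeriv_oneForm_apply {ω : E → E →L[𝕜] G} {p : E} (hω : DifferentiableAt 𝕜 ω p)
    (u v : E) :
    extDeriv (oneForm ω) p ![u, v] =
      fderiv 𝕜 (fun q ↦ ω q v) p u - fderiv 𝕜 (fun q ↦ ω q u) p v := by
  simp [extDeriv_apply (differentiableAt_oneForm hω), Fin.removeNth, sub_eq_add_neg]

theorem extDeriv_oneForm_apply_vectorField {ω : E → E →L[𝕜] G} {X Y : E → E} {p : E}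
    (hω : DifferentiableAt 𝕜 ω p) (hX : DifferentiableAt 𝕜 X p) (hY : DifferentiableAt 𝕜 Y p) :
    extDeriv (oneForm ω) p ![X p, Y p] =
      fderiv 𝕜 (fun q ↦ ω q (Y q)) p (X p) - fderiv 𝕜 (fun q ↦ ω q (X q)) p (Y p)
        - ω p (lieBracket 𝕜 X Y p) := by
  have hXY : ∀ i, DifferentiableAt 𝕜 (![X, Y] i) p := Fin.forall_fin_two.2 ⟨hX, hY⟩
  have cartan := extDeriv_apply_vectorField (differentiableAt_oneForm hω) hXY
  have eval_fields : (![X, Y] · p) = ![X p, Y p] := by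
    ext i; fin_cases i <;> rfl
  rw [eval_fields] at cartan
  simpa [Fin.removeNth, sub_eq_add_neg] using cartan

theorem extDeriv_oneForm_const (L : E →L[𝕜] G) (p : E) :
    extDeriv (oneForm fun _ ↦ L) p = 0 := by
  ext v
  simp [extDeriv_apply (differentiableAt_oneForm (differentiableAt_const L))]

theorem lieBracket_prodMap {X₁ Y₁ : E → E} {X₂ Y₂ : F → F} {q : E × F}
    (hX₁ : DifferentiableAt 𝕜 X₁ q.1) (hY₁ : DifferentiableAt 𝕜 Y₁ q.1)
    (hX₂ : DifferentiableAt 𝕜 X₂ q.2) (hY₂ : DifferentiableAt 𝕜 Y₂ q.2) :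
    lieBracket 𝕜 (Prod.map X₁ X₂) (Prod.map Y₁ Y₂) q =
      (lieBracket 𝕜 X₁ Y₁ q.1, lieBracket 𝕜 X₂ Y₂ q.2) := by
  simp [lieBracket, Prod.map, (hX₁.hasFDerivAt.prodMap q hX₂.hasFDerivAt).fderiv,
    (hY₁.hasFDerivAt.prodMap q hY₂.hasFDerivAt).fderiv]

theorem lieBracket_eq_mul_deriv_sub (h k : 𝕜 → 𝕜) (t : 𝕜) :
    lieBracket 𝕜 h k t = h t * deriv k t - k t * deriv h t := by
  simp [lieBracket, fderiv_eq_smul_deriv]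

/-- The pullback `π₁*ω` to `E × F` of a 1-form on `E`. -/
def pullbackFst (ω : E → E →L[𝕜] G) (q : E × F) : E × F →L[𝕜] G :=
  (ω q.1).comp (fst 𝕜 E F)

theorem differentiableAt_pullbackFst {ω : E → E →L[𝕜] G} {q : E × F}
    (hω : DifferentiableAt 𝕜 ω q.1) : DifferentiableAt 𝕜 (pullbackFst ω) q :=
  (hω.comp q differentiableAt_fst).clm_comp (differentiableAt_const _)

theorem extDeriv_oneForm_pullbackFst {ω : E → E →L[𝕜] G} {q : E × F}
    (hω : DifferentiableAt 𝕜 ω q.1) :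
    extDeriv (oneForm (pullbackFst ω)) q =
      (extDeriv (oneForm ω) q.1).compContinuousLinearMap (fst 𝕜 E F) := by
  have naturality := extDeriv_pullback (r := ⊤) (differentiableAt_oneForm hω)
    (contDiffAt_fst (p := q)) le_top
  simp only [fderiv_fst] at naturality
  exact naturality

/-- The 1-form `η̄ = α π₁*ω + π₂*θ` on `E × G`, where `θ` is the tautological `G`-valued 1-form on
`G` (`θ = dt` for `G = ℝ`). It is the connection form on the trivial bundle `E × G → E` with
potential `α ω`. -/
def connectionForm (α : 𝕜) (ω : E → E →L[𝕜] G) (q : E × G) : E × G →L[𝕜] G :=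
  α • pullbackFst ω q + snd 𝕜 E G

theorem differentiableAt_connectionForm (α : 𝕜) {ω : E → E →L[𝕜] G} {q : E × G}
    (hω : DifferentiableAt 𝕜 ω q.1) : DifferentiableAt 𝕜 (connectionForm α ω) q :=
  ((differentiableAt_pullbackFst hω).const_smul α).add_const _

theorem extDeriv_oneForm_connectionForm (α : 𝕜) {ω : E → E →L[𝕜] G} {q : E × G}
    (hω : DifferentiableAt 𝕜 ω q.1) :
    extDeriv (oneForm (connectionForm α ω)) q =
      α • (extDeriv (oneForm ω) q.1).compContinuousLinearMap (fst 𝕜 E G) := by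
  have decomposition : oneForm (connectionForm α ω) =
      α • oneForm (pullbackFst ω) + oneForm fun _ ↦ snd 𝕜 E G := rfl
  rw [decomposition, extDeriv_add
    ((differentiableAt_oneForm (differentiableAt_pullbackFst hω)).const_smul α)
    (differentiableAt_oneForm (differentiableAt_const _)), extDeriv_smul,
    extDeriv_oneForm_pullbackFst hω, extDeriv_oneForm_const, add_zero]

theorem extDeriv_oneForm_connectionForm_apply (α : 𝕜) {ω : E → E →L[𝕜] G} {q : E × G}
    (hω : DifferentiableAt 𝕜 ω q.1) (u v : E × G) :
    extDeriv (oneForm (connectionForm α ω)) q ![u, v] =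
      α • extDeriv (oneForm ω) q.1 ![u.1, v.1] := by
  rw [extDeriv_oneForm_connectionForm α hω, ContinuousAlternatingMap.smul_apply,
    compContinuousLinearMap_apply, ← FinVec.map_eq]
  rfl

theorem stmt_10_general (α : 𝕜) {ω : E → E →L[𝕜] 𝕜} {p : E} (hω : DifferentiableAt 𝕜 ω p)
    (g₁ : E → E → 𝕜) (J : E → E)
    (hdω : ∀ u v, fderiv 𝕜 (fun q ↦ ω q v) p u - fderiv 𝕜 (fun q ↦ ω q u) p v = 2 * g₁ u (J v))
    (φ : E × 𝕜 → E × 𝕜) (hφ : ∀ v, φ v = (J v.1, -α * ω p (J v.1)))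
    (g : E × 𝕜 → E × 𝕜 → 𝕜)
    (hg : ∀ u w, g u w = g₁ u.1 w.1 + (α * ω p u.1 + u.2) * (α * ω p w.1 + w.2))
    {X₁ Y₁ : E → E} (hX₁ : DifferentiableAt 𝕜 X₁ p) (hY₁ : DifferentiableAt 𝕜 Y₁ p)
    {h₁ h₂ : 𝕜 → 𝕜} {t : 𝕜} (hh₁ : DifferentiableAt 𝕜 h₁ t) (hh₂ : DifferentiableAt 𝕜 h₂ t) :
    fderiv 𝕜 (fun q : E × 𝕜 ↦ α * ω q.1 (Y₁ q.1) + h₂ q.2) (p, t) (X₁ p, h₁ t)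
      - fderiv 𝕜 (fun q : E × 𝕜 ↦ α * ω q.1 (X₁ q.1) + h₁ q.2) (p, t) (Y₁ p, h₂ t)
      - (α * ω p (fderiv 𝕜 Y₁ p (X₁ p) - fderiv 𝕜 X₁ p (Y₁ p))
          + (h₁ t * deriv h₂ t - h₂ t * deriv h₁ t))
      = 2 * α * g (X₁ p, h₁ t) (φ (Y₁ p, h₂ t)) := by
  have g_φ : g (X₁ p, h₁ t) (φ (Y₁ p, h₂ t)) = g₁ (X₁ p) (J (Y₁ p)) := by
    simp [hg, hφ]
  have cartan := extDeriv_oneForm_apply_vectorField (X := Prod.map X₁ h₁) (Y := Prod.map Y₁ h₂)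
    (differentiableAt_connectionForm α (q := (p, t)) hω)
    (hX₁.prodMap (p, t) hh₁) (hY₁.prodMap (p, t) hh₂)
  rw [lieBracket_prodMap hX₁ hY₁ hh₁ hh₂, lieBracket_eq_mul_deriv_sub] at cartan
  calc
    _ = extDeriv (oneForm (connectionForm α ω)) (p, t) ![(X₁ p, h₁ t), (Y₁ p, h₂ t)] :=
      cartan.symm
    _ = α * extDeriv (oneForm ω) p ![X₁ p, Y₁ p] :=
      extDeriv_oneForm_connectionForm_apply α hω _ _
    _ = α * (2 * g₁ (X₁ p) (J (Y₁ p))) := by rw [extDeriv_oneForm_apply hω, hdω]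
    _ = 2 * α * g (X₁ p, h₁ t) (φ (Y₁ p, h₂ t)) := by rw [g_φ]; ring

end

/-- Theorem 3.3: if `dω = Φ₁` (i.e. `u[ω(v)] − v[ω(u)] = 2·g₁(u, Jv)` for constant
vectors `u, v`), then for the product structure on `ℝ^{2n} × ℝ` (with `ℝ^{2n}`
modeled as `(Fin n → ℝ) × (Fin n → ℝ)`) one has
`X[η̄(Y)] − Y[η̄(X)] − η̄([X,Y]) = 2α·g(X, φ̄ Y)`, i.e. `2dη̄ = 2α·Φ̄`; in
particular for `α = 1` the product is a contact metric manifold. -/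
theorem stmt_10 (n : ℕ)
    (g₁ : ((Fin n → ℝ) × (Fin n → ℝ)) → ((Fin n → ℝ) × (Fin n → ℝ)) → ℝ)
    (hg₁ : ∀ u v, g₁ u v = (1/4) * (∑ i, u.1 i * v.1 i + ∑ i, u.2 i * v.2 i))
    (J : ((Fin n → ℝ) × (Fin n → ℝ)) → ((Fin n → ℝ) × (Fin n → ℝ)))
    (hJ : ∀ v, J v = (v.2, -v.1))
    (ω : ((Fin n → ℝ) × (Fin n → ℝ)) → (((Fin n → ℝ) × (Fin n → ℝ)) →L[ℝ] ℝ))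
    (hω : ContDiff ℝ (⊤ : ℕ∞) ω) (α : ℝ)
    (hdω : ∀ p u v,
      fderiv ℝ (fun q => ω q v) p u - fderiv ℝ (fun q => ω q u) p v
        = 2 * g₁ u (J v))
    (φ' : ((Fin n → ℝ) × (Fin n → ℝ)) →
      (((Fin n → ℝ) × (Fin n → ℝ)) × ℝ) → (((Fin n → ℝ) × (Fin n → ℝ)) × ℝ))
    (hφ' : ∀ p v, φ' p v = (J v.1, -α * ω p (J v.1)))
    (g : ((Fin n → ℝ) × (Fin n → ℝ)) →
      (((Fin n → ℝ) × (Fin n → ℝ)) × ℝ) → (((Fin n → ℝ) × (Fin n → ℝ)) × ℝ) → ℝ)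
    (hg : ∀ p u w, g p u w
      = g₁ u.1 w.1 + (α * ω p u.1 + u.2) * (α * ω p w.1 + w.2))
    (X₁ Y₁ : ((Fin n → ℝ) × (Fin n → ℝ)) → ((Fin n → ℝ) × (Fin n → ℝ)))
    (hX₁ : ContDiff ℝ (⊤ : ℕ∞) X₁) (hY₁ : ContDiff ℝ (⊤ : ℕ∞) Y₁)
    (h₁ h₂ : ℝ → ℝ) (hh₁ : ContDiff ℝ (⊤ : ℕ∞) h₁) (hh₂ : ContDiff ℝ (⊤ : ℕ∞) h₂) :
    ∀ (p : (Fin n → ℝ) × (Fin n → ℝ)) (t : ℝ),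
      fderiv ℝ (fun qs : ((Fin n → ℝ) × (Fin n → ℝ)) × ℝ =>
          α * ω qs.1 (Y₁ qs.1) + h₂ qs.2) (p, t) (X₁ p, h₁ t)
      - fderiv ℝ (fun qs : ((Fin n → ℝ) × (Fin n → ℝ)) × ℝ =>
          α * ω qs.1 (X₁ qs.1) + h₁ qs.2) (p, t) (Y₁ p, h₂ t)
      - (α * ω p (fderiv ℝ Y₁ p (X₁ p) - fderiv ℝ X₁ p (Y₁ p))
          + (h₁ t * deriv h₂ t - h₂ t * deriv h₁ t))
      = 2 * α * g p (X₁ p, h₁ t) (φ' p (Y₁ p, h₂ t)) := by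
  exact fun p t ↦ stmt_10_general α (hω.differentiable (by simp) p) g₁ J (hdω p) (φ' p) (hφ' p)
    (g p) (hg p) (hX₁.differentiable (by simp) p) (hY₁.differentiable (by simp) p)
    (hh₁.differentiable (by simp) t) (hh₂.differentiable (by simp) t)
end

section
/- Define φ̄, η̄, ξ̄ on W = V₁ × V₂ as in the warped product construction. Then (φ̄, ξ̄, η̄) is an almost contact structure on W: φ̄(φ̄(X₁,X₂)) = −(X₁,X₂) + η̄(X₁,X₂)·ξ̄ for all (X₁,X₂) ∈ W, and η̄(ξ̄) = 1. (First part of Theorem 4.1: M₁ × M₂ carries an almost contact structure.) -/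
open scoped RealInnerProductSpace

/-!
Let `θ = a ω`. Since `φ ξ = 0`, the warped triple `(φ̄, ξ̄, η̄)` is the image of the product triple
`(J × φ, (0, ξ), η ∘ snd)` under the shear `(x, y) ↦ (x, y - θ x • ξ)`. The product triple is
clearly almost contact, and linear isomorphisms preserve this property.
-/

section AlmostContact

variable {R V W : Type*} [CommRing R] [AddCommGroup V] [Module R V] [AddCommGroup W] [Module R W]

/-- A (pointwise) almost contact structure, without a metric, on a module over a commutative ring:
an endomorphism `φ` with `φ² = -id + η ⊗ ξ`, a Reeb vector `ξ` and a linear form `η` with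
`η ξ = 1`. -/
structure IsAlmostContact (φ : V →ₗ[R] V) (ξ : V) (η : V →ₗ[R] R) : Prop where
  apply_apply (x : V) : φ (φ x) = -x + η x • ξ
  form_reeb : η ξ = 1

namespace IsAlmostContact

variable {φ : V →ₗ[R] V} {ξ : V} {η : V →ₗ[R] R}

lemma apply_apply_reeb (h : IsAlmostContact φ ξ η) : φ (φ ξ) = 0 := by
  rw [h.apply_apply, h.form_reeb, one_smul, neg_add_cancel]

lemma apply_reeb_eq_smul (h : IsAlmostContact φ ξ η) : φ ξ = η (φ ξ) • ξ := by
  have hcube := h.apply_apply (φ ξ)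
  rw [h.apply_apply_reeb, map_zero] at hcube
  exact neg_add_eq_zero.mp hcube.symm

lemma form_apply_reeb [IsReduced R] (h : IsAlmostContact φ ξ η) : η (φ ξ) = 0 := by
  refine eq_zero_of_pow_eq_zero (n := 2) ?_
  calc η (φ ξ) ^ 2 = η (η (φ ξ) • φ ξ) := by rw [map_smul, smul_eq_mul, sq]
    _ = η (φ (φ ξ)) := by rw [← map_smul, ← h.apply_reeb_eq_smul]
    _ = 0 := by rw [h.apply_apply_reeb, map_zero]

lemma apply_reeb [IsReduced R] (h : IsAlmostContact φ ξ η) : φ ξ = 0 := by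
  rw [h.apply_reeb_eq_smul, h.form_apply_reeb, zero_smul]

lemma conj (h : IsAlmostContact φ ξ η) (e : V ≃ₗ[R] W) :
    IsAlmostContact (e.conj φ) (e ξ) (η ∘ₗ e.symm) where
  apply_apply x := by simp [LinearEquiv.conj_apply_apply, h.apply_apply]
  form_reeb := by simp [h.form_reeb]

lemma prodMap (h : IsAlmostContact φ ξ η) {J : W →ₗ[R] W} (hJ : ∀ x, J (J x) = -x) :
    IsAlmostContact (J.prodMap φ) (0, ξ) (η ∘ₗ LinearMap.snd R W V) where
  apply_apply x := by ext <;> simp [hJ, h.apply_apply]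
  form_reeb := h.form_reeb

end IsAlmostContact

/-- The shear `(x, y) ↦ (x, y - θ x • ξ)` of a product along a vector `ξ` of the second factor.
With this sign, conjugation by it takes the product structure to the warped one. -/
def shear (θ : W →ₗ[R] R) (ξ : V) : (W × V) ≃ₗ[R] (W × V) :=
  (LinearEquiv.refl R W).skewProd (LinearEquiv.refl R V) (-θ.smulRight ξ)

lemma shear_apply (θ : W →ₗ[R] R) (ξ : V) (x : W) (y : V) :
    shear θ ξ (x, y) = (x, y - θ x • ξ) := by
  simp [shear, sub_eq_add_neg]

lemma shear_symm_apply (θ : W →ₗ[R] R) (ξ : V) (x : W) (y : V) :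
    (shear θ ξ).symm (x, y) = (x, y + θ x • ξ) := by
  simp [shear]

lemma shear_conj_prodMap_apply (J : W →ₗ[R] W) {φ : V →ₗ[R] V} {ξ : V} (hξ : φ ξ = 0)
    (θ : W →ₗ[R] R) (x : W) (y : V) :
    (shear θ ξ).conj (J.prodMap φ) (x, y) = (J x, φ y - θ (J x) • ξ) := by
  simp [LinearEquiv.conj_apply_apply, shear_symm_apply, shear_apply, hξ]

end AlmostContact

theorem stmt_12_general {R V₁ V₂ : Type*} [CommRing R] [IsReduced R]
    [AddCommGroup V₁] [Module R V₁] [AddCommGroup V₂] [Module R V₂]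
    (J : V₁ →ₗ[R] V₁) (hJ2 : ∀ x : V₁, J (J x) = -x)
    (ω : V₁ →ₗ[R] R) (a : R)
    (φ : V₂ →ₗ[R] V₂) (ξ : V₂) (η : V₂ →ₗ[R] R)
    (hφ2 : ∀ X : V₂, φ (φ X) = -X + η X • ξ) (hηξ : η ξ = 1)
    (φ' : V₁ × V₂ → V₁ × V₂)
    (hφ' : ∀ (X₁ : V₁) (X₂ : V₂), φ' (X₁, X₂) = (J X₁, φ X₂ - (a * ω (J X₁)) • ξ))
    (η' : V₁ × V₂ → R)
    (hη' : ∀ (X₁ : V₁) (X₂ : V₂), η' (X₁, X₂) = a * ω X₁ + η X₂)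
    (ξ' : V₁ × V₂) (hξ' : ξ' = ((0 : V₁), ξ)) :
    (∀ u : V₁ × V₂, φ' (φ' u) = -u + η' u • ξ') ∧ η' ξ' = 1 := by
  have h : IsAlmostContact φ ξ η := ⟨hφ2, hηξ⟩
  let e : (V₁ × V₂) ≃ₗ[R] (V₁ × V₂) := shear (a • ω) ξ
  have hφ'_eq : φ' = e.conj (J.prodMap φ) := by
    ext1 ⟨x, y⟩
    exact (hφ' x y).trans (shear_conj_prodMap_apply J h.apply_reeb (a • ω) x y).symm
  have hη'_eq : η' = (η ∘ₗ LinearMap.snd R V₁ V₂) ∘ₗ e.symm := by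
    ext1 ⟨x, y⟩
    simp [e, hη', shear_symm_apply, hηξ, add_comm]
  have hξ'_eq : ξ' = e (0, ξ) := by simp [e, hξ', shear_apply]
  have hW := (h.prodMap hJ2).conj e
  rw [hφ'_eq, hη'_eq, hξ'_eq]
  exact ⟨hW.apply_apply, hW.form_reeb⟩

/-- First part of Theorem 4.1 (pointwise model): the warped product of an almost
Hermitian vector space `(V₁, g₁, J)` with exact 1-form `ω` and an almost contact
metric vector space `(V₂, g₂, φ, ξ, η)` carries an almost contact structure
`(φ̄, ξ̄, η̄)`. -/
theorem stmt_12 {V₁ V₂ : Type*}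
    [NormedAddCommGroup V₁] [InnerProductSpace ℝ V₁]
    [NormedAddCommGroup V₂] [InnerProductSpace ℝ V₂]
    (J : V₁ →ₗ[ℝ] V₁)
    (hJiso : ∀ x y : V₁, ⟪J x, J y⟫ = ⟪x, y⟫)
    (hJ2 : ∀ x : V₁, J (J x) = -x)
    (ω : V₁ →ₗ[ℝ] ℝ) (a : ℝ)
    (φ : V₂ →ₗ[ℝ] V₂) (ξ : V₂) (η : V₂ →ₗ[ℝ] ℝ)
    (hφ2 : ∀ X : V₂, φ (φ X) = -X + η X • ξ)
    (hηξ : η ξ = 1)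
    (hcompat : ∀ X Y : V₂, ⟪φ X, φ Y⟫ = ⟪X, Y⟫ - η X * η Y)
    (φ' : V₁ × V₂ → V₁ × V₂)
    (hφ' : ∀ (X₁ : V₁) (X₂ : V₂),
      φ' (X₁, X₂) = (J X₁, φ X₂ - (a * ω (J X₁)) • ξ))
    (η' : V₁ × V₂ → ℝ)
    (hη' : ∀ (X₁ : V₁) (X₂ : V₂), η' (X₁, X₂) = a * ω X₁ + η X₂)
    (ξ' : V₁ × V₂) (hξ' : ξ' = ((0 : V₁), ξ)) :
    (∀ u : V₁ × V₂, φ' (φ' u) = -u + η' u • ξ') ∧ η' ξ' = 1 := by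
  exact stmt_12_general J hJ2 ω a φ ξ η hφ2 hηξ φ' hφ' η' hη' ξ' hξ'
end

section
/- Let f > 0. The warped product metric g(X,Y) = g₁(X₁,Y₁) + f²·(g₂(X₂,Y₂) − η(X₂)·η(Y₂)) + η̄(X)·η̄(Y) on W = V₁ × V₂ satisfies the almost contact metric compatibility condition: g(φ̄(X), φ̄(Y)) = g(X,Y) − η̄(X)·η̄(Y) for all X = (X₁,X₂), Y = (Y₁,Y₂) ∈ W. (Second part of Theorem 4.1: (M₁ × M₂, φ̄, ξ̄, η̄, g) with the new warped product metric is an almost contact metric manifold.) -/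
open scoped RealInnerProductSpace

/-!
The form `B - η ⊗ η` is invariant under `φ` and has `ξ` in its left and right kernel. Hence
`φ̄(X₁, X₂) = (J X₁, φ X₂ - α (J X₁) • ξ)` preserves the first two summands of the warped metric
whenever `J` preserves `g₁`: the correction along `ξ` is invisible to them. That correction is
exactly what makes `η̄ ∘ φ̄ = 0`, so the summand `η̄ ⊗ η̄` of the metric is the only one lost.
-/

section AlmostContact

variable {R V : Type*} [CommRing R] [AddCommGroup V] [Module R V]

/-- `(φ, ξ, η)` is a linear almost contact structure, the pointwise model of an almost contact
manifold with Reeb vector `ξ` and contact form `η`. -/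
structure IsAlmostContact_s13 (φ : V →ₗ[R] V) (ξ : V) (η : V →ₗ[R] R) : Prop where
  map_map (X : V) : φ (φ X) = -X + η X • ξ
  eta_reeb : η ξ = 1

/-- The form `B - η ⊗ η`. When `B` is an almost contact metric, it is the restriction
of `B` to the contact hyperplane `ker η`, extended by zero along the Reeb vector. -/
def horizontalForm (B : LinearMap.BilinForm R V) (η : V →ₗ[R] R) : LinearMap.BilinForm R V :=
  B - LinearMap.BilinForm.linMulLin η η

theorem horizontalForm_apply (B : LinearMap.BilinForm R V) (η : V →ₗ[R] R) (X Y : V) :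
    horizontalForm B η X Y = B X Y - η X * η Y :=
  rfl

/-- The almost contact metric condition `B(φX, φY) = B(X, Y) - η(X)η(Y)`, for an arbitrary
bilinear form `B` in place of an inner product. -/
def IsContactCompatible (B : LinearMap.BilinForm R V) (φ : V →ₗ[R] V) (η : V →ₗ[R] R) : Prop :=
  ∀ X Y, B (φ X) (φ Y) = horizontalForm B η X Y

variable {B : LinearMap.BilinForm R V} {φ : V →ₗ[R] V} {ξ : V} {η : V →ₗ[R] R}

namespace IsAlmostContact_s13

variable [IsReduced R]

theorem map_reeb (h : IsAlmostContact_s13 φ ξ η) : φ ξ = 0 := by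
  have map_map_reeb : φ (φ ξ) = 0 := by
    rw [h.map_map, h.eta_reeb, one_smul, neg_add_cancel]
  have map_reeb_eq_smul : φ ξ = η (φ ξ) • ξ := by
    rw [← neg_add_eq_zero, ← h.map_map, map_map_reeb, map_zero]
  have eta_map_reeb_sq : η (φ ξ) ^ 2 = 0 := calc
    η (φ ξ) ^ 2 = η (η (φ ξ) • φ ξ) := by rw [map_smul, smul_eq_mul, sq]
    _ = η (φ (φ ξ)) := by rw [← map_smul, ← map_reeb_eq_smul]
    _ = 0 := by rw [map_map_reeb, map_zero]
  rw [map_reeb_eq_smul, eq_zero_of_pow_eq_zero eta_map_reeb_sq, zero_smul]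

theorem eta_map (h : IsAlmostContact_s13 φ ξ η) (X : V) : η (φ X) = 0 := by
  have smul_reeb_eq_zero : η (φ X) • ξ = 0 := add_eq_left.mp <| calc
    -φ X + η (φ X) • ξ = φ (φ (φ X)) := (h.map_map (φ X)).symm
    _ = -φ X := by rw [h.map_map X, map_add, map_neg, map_smul, h.map_reeb, smul_zero, add_zero]
  calc
    η (φ X) = η (η (φ X) • ξ) := by rw [map_smul, h.eta_reeb, smul_eq_mul, mul_one]
    _ = 0 := by rw [smul_reeb_eq_zero, map_zero]

theorem horizontalForm_map_map (h : IsAlmostContact_s13 φ ξ η) (hB : IsContactCompatible B φ η)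
    (X Y : V) : horizontalForm B η (φ X) (φ Y) = horizontalForm B η X Y := by
  rw [horizontalForm_apply, h.eta_map, zero_mul, sub_zero, hB X Y]

theorem horizontalForm_reeb_left (h : IsAlmostContact_s13 φ ξ η) (hB : IsContactCompatible B φ η)
    (Y : V) : horizontalForm B η ξ Y = 0 := by
  rw [← hB ξ Y, h.map_reeb, map_zero, LinearMap.zero_apply]

theorem horizontalForm_reeb_right (h : IsAlmostContact_s13 φ ξ η) (hB : IsContactCompatible B φ η)
    (X : V) : horizontalForm B η X ξ = 0 := by
  rw [← hB X ξ, h.map_reeb, map_zero]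

theorem horizontalForm_sub_smul_reeb (h : IsAlmostContact_s13 φ ξ η)
    (hB : IsContactCompatible B φ η) (X Y : V) (s t : R) :
    horizontalForm B η (X - s • ξ) (Y - t • ξ) = horizontalForm B η X Y := by
  simp only [map_sub, map_smul, LinearMap.sub_apply, LinearMap.smul_apply,
    h.horizontalForm_reeb_left hB, h.horizontalForm_reeb_right hB, smul_zero, sub_zero]

end IsAlmostContact_s13

end AlmostContact

section WarpedProduct

variable {R V₁ V₂ : Type*} [CommRing R] [AddCommGroup V₁] [Module R V₁]
  [AddCommGroup V₂] [Module R V₂]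

/-- The endomorphism `φ̄(X₁, X₂) = (J X₁, φ X₂ - α(J X₁) ξ)` of the product, where the form `α`
stands for `a ω`. -/
def productEndo (J : V₁ →ₗ[R] V₁) (α : V₁ →ₗ[R] R) (φ : V₂ →ₗ[R] V₂) (ξ : V₂) :
    V₁ × V₂ →ₗ[R] V₁ × V₂ :=
  (J ∘ₗ LinearMap.fst R V₁ V₂).prod
    (φ ∘ₗ LinearMap.snd R V₁ V₂ - ((α ∘ₗ J).smulRight ξ) ∘ₗ LinearMap.fst R V₁ V₂)

/-- The warped product metric `g₁ + c (g₂ - η ⊗ η) + η̄ ⊗ η̄` on the product, where `c` stands for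
`f²`, `α` for `a ω`, and `η̄ = α.coprod η`. -/
def warpedForm (B₁ : LinearMap.BilinForm R V₁) (B₂ : LinearMap.BilinForm R V₂)
    (α : V₁ →ₗ[R] R) (η : V₂ →ₗ[R] R) (c : R) : LinearMap.BilinForm R (V₁ × V₂) :=
  B₁.compl₁₂ (LinearMap.fst R V₁ V₂) (LinearMap.fst R V₁ V₂)
    + c • (horizontalForm B₂ η).compl₁₂ (LinearMap.snd R V₁ V₂) (LinearMap.snd R V₁ V₂)
    + LinearMap.BilinForm.linMulLin (α.coprod η) (α.coprod η)

theorem productEndo_apply (J : V₁ →ₗ[R] V₁) (α : V₁ →ₗ[R] R) (φ : V₂ →ₗ[R] V₂) (ξ : V₂)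
    (X : V₁ × V₂) : productEndo J α φ ξ X = (J X.1, φ X.2 - α (J X.1) • ξ) :=
  rfl

theorem warpedForm_apply (B₁ : LinearMap.BilinForm R V₁) (B₂ : LinearMap.BilinForm R V₂)
    (α : V₁ →ₗ[R] R) (η : V₂ →ₗ[R] R) (c : R) (X Y : V₁ × V₂) :
    warpedForm B₁ B₂ α η c X Y =
      B₁ X.1 Y.1 + c * horizontalForm B₂ η X.2 Y.2 + α.coprod η X * α.coprod η Y :=
  rfl

variable [IsReduced R] {φ : V₂ →ₗ[R] V₂} {ξ : V₂} {η : V₂ →ₗ[R] R}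

theorem IsAlmostContact_s13.coprod_productEndo (h : IsAlmostContact_s13 φ ξ η) (J : V₁ →ₗ[R] V₁)
    (α : V₁ →ₗ[R] R) (X : V₁ × V₂) : α.coprod η (productEndo J α φ ξ X) = 0 := by
  rw [productEndo_apply, LinearMap.coprod_apply, map_sub, map_smul, h.eta_map, h.eta_reeb,
    smul_eq_mul, mul_one, zero_sub, add_neg_cancel]

theorem stmt_13_general {B₁ : LinearMap.BilinForm R V₁} {B₂ : LinearMap.BilinForm R V₂}
    {J : V₁ →ₗ[R] V₁} (hJ : ∀ x y, B₁ (J x) (J y) = B₁ x y) (h : IsAlmostContact_s13 φ ξ η)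
    (hB₂ : IsContactCompatible B₂ φ η) (α : V₁ →ₗ[R] R) (c : R) :
    IsContactCompatible (warpedForm B₁ B₂ α η c) (productEndo J α φ ξ) (α.coprod η) := by
  intro X Y
  calc
    warpedForm B₁ B₂ α η c (productEndo J α φ ξ X) (productEndo J α φ ξ Y)
    _ = B₁ (J X.1) (J Y.1)
          + c * horizontalForm B₂ η (φ X.2 - α (J X.1) • ξ) (φ Y.2 - α (J Y.1) • ξ) := by
      rw [warpedForm_apply, h.coprod_productEndo, zero_mul, add_zero, productEndo_apply,
        productEndo_apply]
    _ = B₁ X.1 Y.1 + c * horizontalForm B₂ η X.2 Y.2 := by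
      rw [hJ, h.horizontalForm_sub_smul_reeb hB₂, h.horizontalForm_map_map hB₂]
    _ = horizontalForm (warpedForm B₁ B₂ α η c) (α.coprod η) X Y := by
      rw [horizontalForm_apply _ (α.coprod η), warpedForm_apply, add_sub_cancel_right]

end WarpedProduct

/-- Second part of Theorem 4.1 (pointwise model): the new warped product metric
`g(X,Y) = g₁(X₁,Y₁) + f²·(g₂(X₂,Y₂) − η(X₂)η(Y₂)) + η̄(X)η̄(Y)` satisfies the
almost contact metric compatibility condition `g(φ̄X, φ̄Y) = g(X,Y) − η̄(X)η̄(Y)`. -/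
theorem stmt_13 {V₁ V₂ : Type*}
    [NormedAddCommGroup V₁] [InnerProductSpace ℝ V₁]
    [NormedAddCommGroup V₂] [InnerProductSpace ℝ V₂]
    (J : V₁ →ₗ[ℝ] V₁)
    (hJiso : ∀ x y : V₁, ⟪J x, J y⟫ = ⟪x, y⟫)
    (hJ2 : ∀ x : V₁, J (J x) = -x)
    (ω : V₁ →ₗ[ℝ] ℝ) (a : ℝ)
    (φ : V₂ →ₗ[ℝ] V₂) (ξ : V₂) (η : V₂ →ₗ[ℝ] ℝ)
    (hφ2 : ∀ X : V₂, φ (φ X) = -X + η X • ξ)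
    (hηξ : η ξ = 1)
    (hcompat : ∀ X Y : V₂, ⟪φ X, φ Y⟫ = ⟪X, Y⟫ - η X * η Y)
    (f : ℝ) (hf : 0 < f)
    (φ' : V₁ × V₂ → V₁ × V₂)
    (hφ' : ∀ (X₁ : V₁) (X₂ : V₂),
      φ' (X₁, X₂) = (J X₁, φ X₂ - (a * ω (J X₁)) • ξ))
    (η' : V₁ × V₂ → ℝ)
    (hη' : ∀ (X₁ : V₁) (X₂ : V₂), η' (X₁, X₂) = a * ω X₁ + η X₂)
    (ξ' : V₁ × V₂) (hξ' : ξ' = ((0 : V₁), ξ))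
    (g : V₁ × V₂ → V₁ × V₂ → ℝ)
    (hg : ∀ (X₁ : V₁) (X₂ : V₂) (Y₁ : V₁) (Y₂ : V₂),
      g (X₁, X₂) (Y₁, Y₂) = ⟪X₁, Y₁⟫ + f ^ 2 * (⟪X₂, Y₂⟫ - η X₂ * η Y₂)
        + η' (X₁, X₂) * η' (Y₁, Y₂)) :
    ∀ X Y : V₁ × V₂, g (φ' X) (φ' Y) = g X Y - η' X * η' Y := by
  rintro ⟨X₁, X₂⟩ ⟨Y₁, Y₂⟩
  simp only [hg, hη', hφ']
  exact stmt_13_general (B₁ := innerₗ V₁) (B₂ := innerₗ V₂) hJiso ⟨hφ2, hηξ⟩ hcompat (a • ω)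
    (f ^ 2) (X₁, X₂) (Y₁, Y₂)
end
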